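/- arXiv:math/9712288 — 2 statements merged into one kernel-verified Lean document; each statement's English description precedes it below -/
import Mathlib

section
/- For every integer k ≥ 2, cov(𝔐_k) ≤ cov(𝔐_{k²}); that is, the covering number of the Mycielski ideal on k^ω is at most the covering number of the Mycielski ideal on (k²)^ω. -/
/-!
Take a finite nonempty `ι` with a surjection `φ : (ι → k) → l`, identify `ω` with `ω^ι`, and send
`f ∈ k^ω` to `Φ f ∈ l^(ω^ι)`, `Φ f t = φ (f ∘ t)`. Every infinite `Y ⊆ ω` contains the ranges of
infinitely many injective tuples `t₀, t₁, … ∈ ω^ι` with pairwise disjoint ranges, so prescribing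
`f ↾ Y` allows the values of `Φ f` at these tuples to be arbitrary. Hence, if the `Φ`-preimage of
`A` restricts onto `k^Y`, then `A` restricts onto `l^X` for `X = {t₀, t₁, …}`: preimages of sets in
`𝔐_l` lie in `𝔐_k`, and a cover of `l^ω` pulls back to a cover of `k^ω` of no larger cardinality.
For `k ≥ 2` one can take `ι = l`.
-/

open Cardinal

/-- The set of restrictions to `X` of members of `A`. -/
def restrictSet {k : ℕ} (A : Set (ℕ → Fin k)) (X : Set ℕ) : Set (↥X → Fin k) :=
  {g | ∃ f ∈ A, ∀ x : X, f ↑x = g x}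

/-- The Mycielski ideal `𝔐ₖ`: all `A ⊆ k^ω` such that for every infinite `X ⊆ ω`
the set of restrictions of members of `A` to `X` is not all of `X → k`. -/
def Mycielski (k : ℕ) : Set (Set (ℕ → Fin k)) :=
  {A | ∀ X : Set ℕ, X.Infinite → restrictSet A X ≠ Set.univ}

/-- The covering number of a family `I` of subsets of `α`: the least cardinality
of a subfamily of `I` whose union is all of `α`. -/
noncomputable def covNum {α : Type} (I : Set (Set α)) : Cardinal :=
  sInf {c : Cardinal | ∃ S : Set (Set α), S ⊆ I ∧ ⋃₀ S = Set.univ ∧ #S = c}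

theorem covNum_le_of_preimage_mem {α β : Type} {I : Set (Set α)} {J : Set (Set β)}
    (hJ : ⋃₀ J = Set.univ) (Φ : α → β) (hΦ : ∀ A ∈ J, Φ ⁻¹' A ∈ I) : covNum I ≤ covNum J := by
  -- the infimum over an empty set of cardinals would be `0`, so a cover has to be exhibited
  refine le_csInf ⟨#J, J, subset_rfl, hJ, rfl⟩ ?_
  rintro _ ⟨S, hSJ, hS, rfl⟩
  have hcover : ⋃₀ (Set.preimage Φ '' S) = Set.univ := by
    rw [Set.sUnion_image, ← Set.preimage_iUnion₂, ← Set.sUnion_eq_biUnion, hS, Set.preimage_univ]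
  calc covNum I ≤ #(Set.preimage Φ '' S) :=
        csInf_le' ⟨_, Set.image_subset_iff.2 fun A hA => hΦ A (hSJ hA), hcover, rfl⟩
    _ ≤ #S := mk_image_le

theorem mem_Mycielski_iff_not_surjOn_comp (β : Type*) [Countable β] [Infinite β] {k : ℕ}
    {A : Set (ℕ → Fin k)} :
    A ∈ Mycielski k ↔
      ∀ y : β → ℕ, Function.Injective y → ¬ Set.SurjOn (fun f => f ∘ y) A Set.univ := by
  constructor
  · intro hA y hy hsurj
    refine hA (Set.range y) (Set.infinite_range_of_injective hy) (Set.eq_univ_of_forall fun g => ?_)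
    obtain ⟨f, hfA, hf⟩ := hsurj (Set.mem_univ (g ∘ Set.rangeFactorization y))
    exact ⟨f, hfA, Set.forall_subtype_range_iff.2 (congrFun hf)⟩
  · intro hA X hX hfull
    have := hX.to_subtype
    obtain ⟨e⟩ : Nonempty (β ≃ X) := nonempty_equiv_of_countable
    refine hA (Subtype.val ∘ e) (Subtype.val_injective.comp e.injective) fun d _ => ?_
    obtain ⟨f, hfA, hf⟩ := Set.eq_univ_iff_forall.1 hfull (d ∘ e.symm)
    exact ⟨f, hfA, funext fun b => (hf (e b)).trans (congrArg d (e.symm_apply_apply b))⟩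

theorem mem_Mycielski_of_subsingleton {k : ℕ} (hk : 2 ≤ k) {A : Set (ℕ → Fin k)}
    (hA : A.Subsingleton) : A ∈ Mycielski k := by
  have : Nontrivial (Fin k) := Fin.nontrivial_iff_two_le.2 hk
  exact (mem_Mycielski_iff_not_surjOn_comp ℕ).2 fun y _ hsurj =>
    Set.nontrivial_univ.not_subsingleton ((hA.image fun f => f ∘ y).anti hsurj)

theorem sUnion_Mycielski {k : ℕ} (hk : 2 ≤ k) : ⋃₀ Mycielski k = Set.univ :=
  Set.eq_univ_of_forall fun f =>
    ⟨{f}, mem_Mycielski_of_subsingleton hk Set.subsingleton_singleton, rfl⟩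

/-- The map `Φ : k^ω → l^ω`, `Φ f n = φ (f ∘ r n)`, which reads `f` along the `ι`-tuple `r n` coded
by `n` and codes the resulting tuple of digits by `φ`. -/
def tupleCode {ι : Type*} {k l : ℕ} (r : ℕ → ι → ℕ) (φ : (ι → Fin k) → Fin l) (f : ℕ → Fin k) :
    ℕ → Fin l :=
  fun n => φ (f ∘ r n)

theorem preimage_tupleCode_mem_Mycielski {ι : Type*} [Finite ι] [Nonempty ι] {k l : ℕ}
    {r : ℕ → ι → ℕ} (hr : Function.Surjective r)
    {φ : (ι → Fin k) → Fin l} (hφ : Function.Surjective φ)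
    {A : Set (ℕ → Fin l)} (hA : A ∈ Mycielski l) : tupleCode r φ ⁻¹' A ∈ Mycielski k := by
  refine (mem_Mycielski_iff_not_surjOn_comp (ℕ × ι)).2 fun y hy hsurj => ?_
  choose t ht using fun n => hr fun i => y (n, i)
  have ht_inj : Function.Injective t := by
    intro m n hmn
    obtain ⟨i⟩ := ‹Nonempty ι›
    have hy_eq : y (m, i) = y (n, i) := by
      rw [← congrFun (ht m) i, ← congrFun (ht n) i, hmn]
    exact congrArg Prod.fst (hy hy_eq)
  refine (mem_Mycielski_iff_not_surjOn_comp ℕ).1 hA t ht_inj fun g _ => ?_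
  choose d hd using fun n => hφ (g n)
  obtain ⟨f, hfA, hf⟩ := hsurj (Set.mem_univ fun p : ℕ × ι => d p.1 p.2)
  refine ⟨tupleCode r φ f, hfA, funext fun n => ?_⟩
  calc φ (f ∘ r (t n)) = φ (fun i => f (y (n, i))) := by rw [ht]; rfl
    _ = φ (d n) := congrArg φ (funext fun i => congrFun hf (n, i))
    _ = g n := hd n

theorem exists_surjective_pi_self (α β : Type*) [Nontrivial α] [Nonempty β] :
    ∃ φ : (β → α) → β, Function.Surjective φ := by
  classical
  obtain ⟨a, a', ha⟩ := exists_pair_ne α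
  have hinj : Function.Injective fun b : β => Function.update (fun _ => a) b a' := by
    intro b c hbc
    by_contra hne
    exact ha (by simpa [hne] using (congrFun hbc b).symm)
  exact ⟨Function.invFun _, Function.invFun_surjective hinj⟩

theorem covNum_Mycielski_le_sq_general (k l : ℕ) (hk : 2 ≤ k) (hl : 2 ≤ l) :
    covNum (Mycielski k) ≤ covNum (Mycielski l) := by
  have : Nontrivial (Fin k) := Fin.nontrivial_iff_two_le.2 hk
  have : Nontrivial (Fin l) := Fin.nontrivial_iff_two_le.2 hl
  obtain ⟨r, hr⟩ := exists_surjective_nat (Fin l → ℕ)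
  obtain ⟨φ, hφ⟩ := exists_surjective_pi_self (Fin k) (Fin l)
  exact covNum_le_of_preimage_mem (sUnion_Mycielski hl) (tupleCode r φ)
    fun _ => preimage_tupleCode_mem_Mycielski hr hφ

/-- For every integer `k ≥ 2`, `cov(𝔐_k) ≤ cov(𝔐_{k²})`. -/
theorem covNum_Mycielski_le_sq (k : ℕ) (hk : 2 ≤ k) :
    covNum (Mycielski k) ≤ covNum (Mycielski (k ^ 2)) :=
  covNum_Mycielski_le_sq_general k (k ^ 2) hk (hk.trans (Nat.le_self_pow two_ne_zero k))
end

section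
/- If i and j are integers with i ≥ j ≥ 2, then cov(ℜ_i) ≤ cov(ℜ_j); that is, the covering number of the Rosłanowski ideal on i^ω is at most the covering number of the Rosłanowski ideal on j^ω. -/
/-!
A surjection `φ : i → j` induces `f ↦ φ ∘ f` from `i^ω` to `j^ω`, and preimages under this map of
sets in `ℜ_j` lie in `ℜ_i`: given `g ∈ PF_i`, extend `φ ∘ g` to a witness `h ∈ PF_j`, and fill in
`g` outside its domain by a lift of `h`. The resulting `g'` satisfies `φ ∘ g' =* h`, so `g' ⊆* f`
would give `h ⊆* φ ∘ f`. Pulling back a cover of `j^ω` therefore gives a cover of `i^ω` that is no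
larger. The infimum of the empty set of cardinals being `0`, one also needs that `ℜ_j` covers
`j^ω`, which holds as it contains the singletons when `j ≥ 2`.
-/

open Cardinal

/-- `PF k`: partial functions from `ω` to `k` (encoded as functions
`ℕ → Option (Fin k)`) whose domain is coinfinite. -/
def PF (k : ℕ) : Set (ℕ → Option (Fin k)) :=
  {g | {n | g n = none}.Infinite}

/-- `g ⊆* f` for partial functions: for all but finitely many `x` in the domain
of `g`, `x` is in the domain of `f` and `f x = g x`. -/
def SubStar {k : ℕ} (g f : ℕ → Option (Fin k)) : Prop :=
  {x | (g x).isSome ∧ f x ≠ g x}.Finite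

/-- A total function `ℕ → Fin k` regarded as a partial function. -/
def toPartial {k : ℕ} (f : ℕ → Fin k) : ℕ → Option (Fin k) := fun n => some (f n)

/-- The Rosłanowski ideal `ℜₖ`: all `A ⊆ k^ω` such that for every `g ∈ PF k`
there is `g' ∈ PF k` with `g ⊆* g'` and `g' ⊄* f` for every `f ∈ A`. -/
def Ros (k : ℕ) : Set (Set (ℕ → Fin k)) :=
  {A | ∀ g ∈ PF k, ∃ g' ∈ PF k, SubStar g g' ∧ ∀ f ∈ A, ¬ SubStar g' (toPartial f)}

section Covering

variable {α β : Type} {I : Set (Set α)} {J : Set (Set β)}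

lemma covNum_le_mk {S : Set (Set α)} (hSI : S ⊆ I) (hS : ⋃₀ S = Set.univ) : covNum I ≤ #S :=
  csInf_le' ⟨S, hSI, hS, rfl⟩

lemma covNum_le_covNum_of_preimage_mem (F : α → β) (hF : ∀ A ∈ J, F ⁻¹' A ∈ I)
    (hJ : ⋃₀ J = Set.univ) : covNum I ≤ covNum J := by
  refine le_csInf ⟨#J, J, subset_rfl, hJ, rfl⟩ ?_
  rintro _ ⟨S, hSJ, hS, rfl⟩
  have hpre_subset : Set.preimage F '' S ⊆ I := Set.image_subset_iff.2 fun A hA => hF A (hSJ hA)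
  have hpre_cover : ⋃₀ (Set.preimage F '' S) = Set.univ := by
    rw [Set.sUnion_image, ← Set.preimage_sUnion, hS, Set.preimage_univ]
  exact (covNum_le_mk hpre_subset hpre_cover).trans mk_image_le

end Covering

lemma exists_union_eq_disjoint_infinite {α : Type*} {s : Set α} (hs : s.Infinite) :
    ∃ t u : Set α, t ∪ u = s ∧ Disjoint t u ∧ t.Infinite ∧ u.Infinite := by
  obtain ⟨t, u, rfl, hdisj, hcard⟩ := hs.exists_union_disjoint_cardinal_eq_of_infinite
  obtain ⟨e⟩ := Cardinal.eq.1 hcard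
  have htu : t.Infinite ↔ u.Infinite := by
    rw [← Set.infinite_coe_iff, e.infinite_iff, Set.infinite_coe_iff]
  have hor : t.Infinite ∨ u.Infinite := Set.infinite_union.1 hs
  exact ⟨t, u, rfl, hdisj, by tauto, by tauto⟩

section PartialFunctions

variable {i j k : ℕ}

lemma SubStar.trans {g h f : ℕ → Option (Fin k)} (hgh : SubStar g h) (hhf : SubStar h f) :
    SubStar g f := by
  refine (hgh.union hhf).subset fun n ⟨hgn, hfn⟩ => ?_
  by_cases hn : h n = g n
  · exact Or.inr ⟨hn ▸ hgn, hn ▸ hfn⟩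
  · exact Or.inl ⟨hgn, hn⟩

lemma SubStar.map {g h : ℕ → Option (Fin i)} (hgh : SubStar g h) (φ : Fin i → Fin j) :
    SubStar (Option.map φ ∘ g) (Option.map φ ∘ h) :=
  hgh.subset fun _ ⟨hgn, hn⟩ => ⟨by simpa using hgn, ne_of_apply_ne (Option.map φ) hn⟩

lemma SubStar.mem_PF {g h : ℕ → Option (Fin k)} (hgh : SubStar g h) (hh : h ∈ PF k) :
    g ∈ PF k := by
  refine (Set.Infinite.sdiff hh hgh).mono ?_
  rintro n ⟨hhn, hn⟩
  by_contra hgn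
  exact hn ⟨Option.isSome_iff_ne_none.2 hgn, fun heq => hgn (heq.symm.trans hhn)⟩

lemma map_comp_mem_PF_iff (φ : Fin i → Fin j) {g : ℕ → Option (Fin i)} :
    Option.map φ ∘ g ∈ PF j ↔ g ∈ PF i := by
  simp only [PF, Set.mem_ofPred_eq, Function.comp_apply, Option.map_eq_none_iff]

/-- The partial function that agrees with `g` on the domain of `g` and with `h` elsewhere; it is
used to extend a given `g`. -/
def overlay (g h : ℕ → Option (Fin k)) : ℕ → Option (Fin k) := fun n => (g n).or (h n)

lemma subStar_overlay_left (g h : ℕ → Option (Fin k)) : SubStar g (overlay g h) := by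
  refine Set.finite_empty.subset ?_
  rintro n ⟨hgn, hn⟩
  exact hn (Option.or_of_isSome hgn)

lemma SubStar.finite_overlay_ne {g h : ℕ → Option (Fin k)} (hgh : SubStar g h) :
    {n | overlay g h n ≠ h n}.Finite := by
  refine hgh.subset fun n (hn : (g n).or (h n) ≠ h n) => ?_
  have hgn : (g n).isSome := by
    by_contra hgn
    exact hn (by rw [Option.not_isSome_iff_eq_none.1 hgn, Option.none_or])
  rw [Option.or_of_isSome hgn] at hn
  exact ⟨hgn, hn.symm⟩

lemma SubStar.overlay_left {g h : ℕ → Option (Fin k)} (hgh : SubStar g h) :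
    SubStar (overlay g h) h :=
  hgh.finite_overlay_ne.subset fun _ hn => hn.2.symm

lemma SubStar.subStar_overlay_right {g h : ℕ → Option (Fin k)} (hgh : SubStar g h) :
    SubStar h (overlay g h) :=
  hgh.finite_overlay_ne.subset fun _ hn => hn.2

lemma map_comp_overlay (φ : Fin i → Fin j) (g h : ℕ → Option (Fin i)) :
    Option.map φ ∘ overlay g h = overlay (Option.map φ ∘ g) (Option.map φ ∘ h) :=
  funext fun _ => Option.map_or

lemma exists_mem_PF_subStar_infinite_eq {g : ℕ → Option (Fin k)} (hg : g ∈ PF k)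
    (f : ℕ → Fin k) :
    ∃ g' ∈ PF k, SubStar g g' ∧ {n | g' n = some (f n)}.Infinite := by
  classical
  obtain ⟨D, E, hDE, hdisj, hD, hE⟩ := exists_union_eq_disjoint_infinite hg
  have hgD : ∀ n ∈ D, g n = none := fun n hn => hDE.subset (Or.inl hn)
  have hgE : ∀ n ∈ E, g n = none := fun n hn => hDE.subset (Or.inr hn)
  refine ⟨overlay g fun n => if n ∈ D then some (f n) else none, ?_, subStar_overlay_left g _, ?_⟩
  · refine hE.mono fun n hn => ?_
    simp [overlay, hgE n hn, hdisj.notMem_of_mem_right hn]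
  · refine hD.mono fun n hn => ?_
    simp [overlay, hgD n hn, hn]

end PartialFunctions

section Ideal

variable {i j k : ℕ}

lemma preimage_comp_mem_Ros {φ : Fin i → Fin j} (hφ : φ.Surjective) {A : Set (ℕ → Fin j)}
    (hA : A ∈ Ros j) : (φ ∘ ·) ⁻¹' A ∈ Ros i := by
  intro g hg
  obtain ⟨h, hh, hgh, hhA⟩ := hA (Option.map φ ∘ g) ((map_comp_mem_PF_iff φ).2 hg)
  obtain ⟨ψ, hψ⟩ := hφ.hasRightInverse
  let g' := overlay g (Option.map ψ ∘ h)
  have hmap : Option.map φ ∘ g' = overlay (Option.map φ ∘ g) h := by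
    rw [map_comp_overlay, ← Function.comp_assoc, Option.map_comp_map, hψ.comp_eq_id,
      Option.map_id, Function.id_comp]
  refine ⟨g', ?_, subStar_overlay_left g _, fun f hf hg'f => hhA _ hf ?_⟩
  · rw [← map_comp_mem_PF_iff φ, hmap]
    exact hgh.overlay_left.mem_PF hh
  · have hhg' : SubStar h (Option.map φ ∘ g') := hmap ▸ hgh.subStar_overlay_right
    exact hhg'.trans (hg'f.map φ)

lemma singleton_mem_Ros (hk : 2 ≤ k) (f : ℕ → Fin k) : {f} ∈ Ros k := by
  intro g hg
  have : Nontrivial (Fin k) := Fin.nontrivial_iff_two_le.2 hk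
  choose f' hf' using fun n => exists_ne (f n)
  obtain ⟨g', hg', hgg', hinf⟩ := exists_mem_PF_subStar_infinite_eq hg f'
  refine ⟨g', hg', hgg', ?_⟩
  rintro _ rfl hsub
  refine hinf (hsub.subset fun n (hn : g' n = some (f' n)) => ?_)
  simp [hn, toPartial, (hf' n).symm]

lemma sUnion_Ros (hk : 2 ≤ k) : ⋃₀ Ros k = Set.univ :=
  Set.sUnion_eq_univ_iff.2 fun f => ⟨{f}, singleton_mem_Ros hk f, rfl⟩

end Ideal

/-- If `i ≥ j ≥ 2` then `cov(ℜ_i) ≤ cov(ℜ_j)`. -/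
theorem covNum_Ros_mono (i j : ℕ) (hj : 2 ≤ j) (hij : j ≤ i) :
    covNum (Ros i) ≤ covNum (Ros j) := by
  have : Nonempty (Fin j) := ⟨⟨0, by lia⟩⟩
  have hsurj : (Function.invFun (Fin.castLE hij)).Surjective :=
    Function.invFun_surjective (Fin.castLE_injective hij)
  exact covNum_le_covNum_of_preimage_mem _ (fun _ => preimage_comp_mem_Ros hsurj) (sUnion_Ros hj)
end
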